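/- Let (Ω, 𝓕, P) be a probability space, let X_t : Ω → ℝ (t ∈ ℕ) be random variables each of which is almost everywhere strongly measurable, in L²(P), and mean zero (∫ X_t dP = 0), let g : ℕ → ℝ be a nonnegative summable sequence such that |cov(X_s, X_t)| ≤ g(dist(s,t)) for all s, t ∈ ℕ, and let c : ℕ → ℝ be weights with |c_t| ≤ 1 for all t. Then the sequence of sample averages ω ↦ (1/N)·Σ_{t=0}^{N−1} c_t·X_t(ω) converges to 0 in measure (in probability) with respect to P as N → ∞. -/

import Mathlib

open MeasureTheory Finset Filter

/-- The covariance of two real random variables `f` and `g` under `P`: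
`∫ (f − E[f])·(g − E[g]) dP`. -/
noncomputable def cov {Ω : Type*} [MeasurableSpace Ω] (P : Measure Ω)
    (f g : Ω → ℝ) : ℝ :=
  ∫ ω, (f ω - ∫ x, f x ∂P) * (g ω - ∫ x, g x ∂P) ∂P

/-!
Up to the constant `C ^ 2`, where `C` bounds the weights, the variance of the `N`-th average is at
most `N⁻² ∑ s < N, ∑ t < N, g |s - t|`. Each distance `n < N` occurs at most twice in a row of this
double sum, so the variance is at most `2 C ^ 2` times the Cesàro mean `N⁻¹ ∑ n < N, g n`, which
tends to `0` as soon as `g` does. Chebyshev's inequality concludes.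
-/

section

open ProbabilityTheory Topology

theorem sum_range_natDist_le {M : Type*} [AddCommMonoid M] [PartialOrder M] [IsOrderedAddMonoid M]
    {g : ℕ → M} (hg : ∀ n, 0 ≤ g n) {s N : ℕ} (hs : s < N) :
    ∑ t ∈ range N, g (Nat.dist s t) ≤ 2 • ∑ n ∈ range N, g n := by
  have sum_le_of_injOn (A : Finset ℕ) (hA : A ⊆ range N) (hinj : Set.InjOn (Nat.dist s) A) :
      ∑ t ∈ A, g (Nat.dist s t) ≤ ∑ n ∈ range N, g n := by
    have himage : A.image (Nat.dist s) ⊆ range N := by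
      intro n hn
      obtain ⟨t, ht, rfl⟩ := mem_image.mp hn
      have := mem_range.mp (hA ht)
      simp only [Nat.dist, mem_range]
      lia
    rw [← sum_image (f := g) hinj]
    exact sum_le_sum_of_subset_of_nonneg himage fun n _ _ ↦ hg n
  have hleft : Set.InjOn (Nat.dist s) (range s) := by
    intro a ha b hb hab
    simp only [Nat.dist, coe_range, Set.mem_Iio] at ha hb hab
    lia
  have hright : Set.InjOn (Nat.dist s) (Ico s N) := by
    intro a ha b hb hab
    simp only [Nat.dist, coe_Ico, Set.mem_Ico] at ha hb hab
    lia
  rw [← sum_range_add_sum_Ico _ hs.le, two_nsmul]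
  refine add_le_add (sum_le_of_injOn _ (range_mono hs.le) hleft) (sum_le_of_injOn _ ?_ hright)
  exact range_eq_Ico N ▸ Ico_subset_Ico_left s.zero_le

variable {Ω : Type*} [MeasurableSpace Ω] {P : Measure Ω}

theorem cov_eq_covariance (f g : Ω → ℝ) : cov P f g = covariance f g P :=
  rfl

theorem const_mul_sum_sub_integral {ι : Type*} {s : Finset ι} {X : ι → Ω → ℝ}
    (hX : ∀ i ∈ s, Integrable (X i) P) (r : ℝ) (c : ι → ℝ) (ω : Ω) :
    r * ∑ i ∈ s, c i * X i ω - ∫ x, r * ∑ i ∈ s, c i * X i x ∂P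
      = r * ∑ i ∈ s, c i * (X i ω - ∫ x, X i x ∂P) := by
  rw [integral_const_mul, integral_finsetSum _ fun i hi ↦ (hX i hi).const_mul (c i)]
  simp only [integral_const_mul, mul_sub, sum_sub_distrib]

variable [IsFiniteMeasure P]

theorem tendstoInMeasure_sub_integral_of_tendsto_variance {ι : Type*} {l : Filter ι}
    {X : ι → Ω → ℝ} (hX : ∀ i, MemLp (X i) 2 P)
    (hvar : Tendsto (fun i ↦ Var[X i; P]) l (𝓝 0)) :
    TendstoInMeasure P (fun i ω ↦ X i ω - ∫ x, X i x ∂P) l (fun _ ↦ 0) := by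
  refine tendstoInMeasure_iff_norm.mpr fun ε hε ↦ ?_
  have hbound : Tendsto (fun i ↦ ENNReal.ofReal (Var[X i; P] / ε ^ 2)) l (𝓝 0) := by
    simpa using ENNReal.tendsto_ofReal (hvar.div_const (ε ^ 2))
  refine tendsto_of_tendsto_of_tendsto_of_le_of_le tendsto_const_nhds hbound
    (fun _ ↦ zero_le) fun i ↦ ?_
  simpa using meas_ge_le_variance_div_sq (hX i) hε

theorem variance_sum_const_mul_le {ι : Type*} {s : Finset ι} {X : ι → Ω → ℝ}
    (hX : ∀ i ∈ s, MemLp (X i) 2 P) {c : ι → ℝ} {C : ℝ} (hc : ∀ i ∈ s, |c i| ≤ C) :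
    Var[fun ω ↦ ∑ i ∈ s, c i * X i ω; P] ≤ C ^ 2 * ∑ i ∈ s, ∑ j ∈ s, |cov P (X i) (X j)| := by
  rw [variance_fun_sum' fun i hi ↦ (hX i hi).const_mul (c i), mul_sum]
  refine sum_le_sum fun i hi ↦ ?_
  rw [mul_sum]
  refine sum_le_sum fun j hj ↦ ?_
  have hC : 0 ≤ C := (abs_nonneg _).trans (hc i hi)
  calc covariance (fun ω ↦ c i * X i ω) (fun ω ↦ c j * X j ω) P
      = c i * c j * cov P (X i) (X j) := by
        rw [covariance_const_mul_left, covariance_const_mul_right, cov_eq_covariance, mul_assoc]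
    _ ≤ |c i| * |c j| * |cov P (X i) (X j)| := by
        simpa only [abs_mul] using le_abs_self (c i * c j * cov P (X i) (X j))
    _ ≤ C ^ 2 * |cov P (X i) (X j)| := by
        rw [sq]
        gcongr
        exacts [hc i hi, hc j hj]

variable {X : ℕ → Ω → ℝ} {g c : ℕ → ℝ} {C : ℝ}

theorem variance_weighted_average_le (hX : ∀ t, MemLp (X t) 2 P)
    (hcov : ∀ s t, |cov P (X s) (X t)| ≤ g (Nat.dist s t)) (hc : ∀ t, |c t| ≤ C) (N : ℕ) :
    Var[fun ω ↦ (1 / (N : ℝ)) * ∑ t ∈ range N, c t * X t ω; P]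
      ≤ 2 * C ^ 2 * ((N : ℝ)⁻¹ * ∑ n ∈ range N, g n) := by
  have hg (n : ℕ) : 0 ≤ g n := by
    simpa [Nat.dist] using (abs_nonneg _).trans (hcov 0 n)
  have hsum : ∑ s ∈ range N, ∑ t ∈ range N, |cov P (X s) (X t)|
      ≤ N * (2 * ∑ n ∈ range N, g n) := by
    calc ∑ s ∈ range N, ∑ t ∈ range N, |cov P (X s) (X t)|
        ≤ ∑ s ∈ range N, ∑ t ∈ range N, g (Nat.dist s t) := by
          gcongr with s _ t _
          exact hcov s t
      _ ≤ ∑ _s ∈ range N, 2 • ∑ n ∈ range N, g n :=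
          sum_le_sum fun s hs ↦ sum_range_natDist_le hg (mem_range.mp hs)
      _ = N * (2 * ∑ n ∈ range N, g n) := by simp
  calc Var[fun ω ↦ (1 / (N : ℝ)) * ∑ t ∈ range N, c t * X t ω; P]
      = (1 / (N : ℝ)) ^ 2 * Var[fun ω ↦ ∑ t ∈ range N, c t * X t ω; P] :=
        variance_const_mul _ _ _
    _ ≤ (1 / (N : ℝ)) ^ 2 * (C ^ 2 * (N * (2 * ∑ n ∈ range N, g n))) := by
        grw [variance_sum_const_mul_le (fun t _ ↦ hX t) fun t _ ↦ hc t, hsum]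
    _ = 2 * C ^ 2 * ((N : ℝ)⁻¹ * ∑ n ∈ range N, g n) := by
        field_simp

theorem tendsto_variance_weighted_average (hX : ∀ t, MemLp (X t) 2 P)
    (hg : Tendsto g atTop (𝓝 0)) (hcov : ∀ s t, |cov P (X s) (X t)| ≤ g (Nat.dist s t))
    (hc : ∀ t, |c t| ≤ C) :
    Tendsto (fun N : ℕ ↦ Var[fun ω ↦ (1 / (N : ℝ)) * ∑ t ∈ range N, c t * X t ω; P])
      atTop (𝓝 0) := by
  have hbound := hg.cesaro.const_mul (2 * C ^ 2)
  rw [mul_zero] at hbound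
  exact squeeze_zero (fun _ ↦ variance_nonneg _ _) (variance_weighted_average_le hX hcov hc) hbound

theorem tendstoInMeasure_weighted_average_general (hX : ∀ t, MemLp (X t) 2 P)
    (hg : Tendsto g atTop (𝓝 0)) (hcov : ∀ s t, |cov P (X s) (X t)| ≤ g (Nat.dist s t))
    (hc : ∀ t, |c t| ≤ C) :
    TendstoInMeasure P
      (fun (N : ℕ) ω ↦ (1 / (N : ℝ)) * ∑ t ∈ range N, c t * (X t ω - ∫ x, X t x ∂P))
      atTop (fun _ ↦ 0) := by
  have hint (N : ℕ) : ∀ t ∈ range N, Integrable (X t) P := fun t _ ↦ (hX t).integrable one_le_two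
  have hmem (N : ℕ) : MemLp (fun ω ↦ (1 / (N : ℝ)) * ∑ t ∈ range N, c t * X t ω) 2 P :=
    (memLp_finsetSum _ fun t _ ↦ (hX t).const_mul (c t)).const_mul _
  simpa only [const_mul_sum_sub_integral (hint _)] using
    tendstoInMeasure_sub_integral_of_tendsto_variance hmem
      (tendsto_variance_weighted_average hX hg hcov hc)

end

theorem tendstoInMeasure_weighted_average {Ω : Type*} [MeasurableSpace Ω]
    (P : Measure Ω) [IsProbabilityMeasure P]
    (X : ℕ → Ω → ℝ) (hmeas : ∀ t, AEStronglyMeasurable (X t) P)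
    (hL2 : ∀ t, MemLp (X t) 2 P) (hmean : ∀ t, ∫ ω, X t ω ∂P = 0)
    (g : ℕ → ℝ) (hg0 : ∀ n, 0 ≤ g n) (hgsum : Summable g)
    (hcov : ∀ s t : ℕ, |cov P (X s) (X t)| ≤ g (Nat.dist s t))
    (c : ℕ → ℝ) (hc : ∀ t, |c t| ≤ 1) :
    TendstoInMeasure P
      (fun (N : ℕ) (ω : Ω) => (1 / (N : ℝ)) * ∑ t ∈ Finset.range N, c t * X t ω)
      Filter.atTop (fun _ => 0) := by
  simpa only [hmean, sub_zero] using
    tendstoInMeasure_weighted_average_general hL2 hgsum.tendsto_atTop_zero hcov hc
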